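/- Let (H, x, Y) be an sl2-triple in a finite-dimensional Lie algebra g over a field k of characteristic zero. If the eigenspace g_1 is zero, then g_m = 0 for every odd integer m. -/

import Mathlib

/-- The `i`-eigenspace of `ad H` on a Lie algebra `g`:
`g_i = {z ∈ g | ⁅H, z⁆ = (i : k) • z}`. -/
def gwt (k : Type*) [Field k] {g : Type*} [LieRing g] [LieAlgebra k g]
    (H : g) (i : ℤ) : Submodule k g where
  carrier := {z | ⁅H, z⁆ = (i : k) • z}
  add_mem' := by
    intro a b ha hb
    simp only [Set.mem_setOf_eq] at *
    rw [lie_add, ha, hb, smul_add]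
  zero_mem' := by simp
  smul_mem' := by
    intro c a ha
    simp only [Set.mem_setOf_eq] at *
    rw [lie_smul, ha]
    exact smul_comm c ((i : k)) a

/-!
Apply `ad x` repeatedly to a nonzero vector of weight `m ≥ 0`. The weights strictly increase, so by
finiteness the process stops at a primitive vector, whose weight is a natural number `N ≥ m` of the
same parity as `m`. Applying `ad Y` to it produces nonzero vectors of weights `N, N - 2, …, -N`.
Hence every integer `j` with `|j| ≤ m` and the parity of `m` is a weight. Negative `m` are handled
by the opposite triple `(-H, Y, x)`. Only the action of the triple matters, so the argument works in
any Noetherian torsion-free representation.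
-/

open LieModule Module

section Eigenspaces

variable {R M : Type*} [CommRing R] [IsDomain R] [AddCommGroup M] [Module R M] [IsTorsionFree R M]

theorem exists_eq_zero_of_forall_mem_eigenspace [IsNoetherian R M] {ι : Type*} [Infinite ι]
    (φ : End R M) {μ : ι → R} (hμ : Function.Injective μ) {v : ι → M}
    (hv : ∀ i, v i ∈ φ.eigenspace (μ i)) : ∃ i, v i = 0 := by
  by_contra! hne
  have hli : LinearIndependent R v :=
    φ.eigenvectors_linearIndependent' μ hμ v fun i ↦ ⟨hv i, hne i⟩
  have : Finite ι := hli.finite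
  exact not_finite ι

theorem zero_eigenspace_eq_bot {μ : R} (hμ : μ ≠ 0) : (0 : End R M).eigenspace μ = ⊥ := by
  refine (Submodule.eq_bot_iff _).2 fun v hv ↦ ?_
  have hμv : μ • v = 0 := (End.mem_eigenspace_iff.1 hv).symm
  exact (smul_eq_zero.1 hμv).resolve_left hμ

end Eigenspaces

theorem neg_eigenspace_neg {R M : Type*} [CommRing R] [AddCommGroup M] [Module R M]
    (φ : End R M) (μ : R) : (-φ).eigenspace (-μ) = φ.eigenspace μ := by
  ext v
  simp only [End.mem_eigenspace_iff, LinearMap.neg_apply, neg_smul, neg_inj]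

theorem isSl2Triple_of_lie_eq_smul (R : Type*) {L : Type*} [CommRing R] [LieRing L]
    [LieAlgebra R L] {h e f : L} (hne : h ≠ 0) (hhe : ⁅h, e⁆ = (2 : R) • e)
    (hhf : ⁅h, f⁆ = (-2 : R) • f) (hef : ⁅e, f⁆ = h) : IsSl2Triple h e f where
  h_ne_zero := hne
  lie_e_f := hef
  lie_h_e_nsmul := by rw [hhe, two_smul, two_nsmul]
  lie_h_f_nsmul := by rw [hhf, neg_smul, two_smul, two_nsmul]

section Weights

variable {R L M : Type*} [CommRing R] [IsDomain R] [CharZero R] [LieRing L] [LieAlgebra R L]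
  [AddCommGroup M] [Module R M] [IsTorsionFree R M] [LieRingModule L M] [LieModule R L M]
  {h e f : L}

theorem eigenspace_sub_two_mul_ne_bot {t : IsSl2Triple h e f} {w : M} {N i : ℕ}
    (P : t.HasPrimitiveVectorWith w (N : R)) (hi : i ≤ N) :
    (toEnd R L M h).eigenspace (N - 2 * i : R) ≠ ⊥ :=
  (Submodule.ne_bot_iff _).2 ⟨_, End.mem_eigenspace_iff.2 (P.lie_h_pow_toEnd_f i),
    P.pow_toEnd_f_ne_zero_of_eq_nat rfl hi⟩

variable [IsNoetherian R M]

theorem exists_pow_toEnd_e_eq_zero (t : IsSl2Triple h e f) {μ : R} {v : M}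
    (hv : ⁅h, v⁆ = μ • v) : ∃ n : ℕ, (toEnd R L M e ^ n) v = 0 := by
  have hinj : Function.Injective fun n : ℕ ↦ μ + 2 * (n : R) := fun a b hab ↦ by
    simpa using hab
  exact exists_eq_zero_of_forall_mem_eigenspace (toEnd R L M h) hinj fun n ↦
    End.mem_eigenspace_iff.2 (t.lie_h_pow_toEnd_e hv n)

theorem exists_hasPrimitiveVectorWith_add_two_mul (t : IsSl2Triple h e f)
    {μ : R} {v : M} (hv : ⁅h, v⁆ = μ • v) (hv₀ : v ≠ 0) :
    ∃ (n : ℕ) (w : M), t.HasPrimitiveVectorWith w (μ + 2 * n) := by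
  obtain ⟨n, hne, hzero⟩ := Nat.exists_not_and_succ_of_not_zero_of_exists
    (p := fun n ↦ (toEnd R L M e ^ n) v = 0) hv₀ (exists_pow_toEnd_e_eq_zero t hv)
  exact ⟨n, _, hne, t.lie_h_pow_toEnd_e hv n, (IsSl2Triple.lie_e_pow_toEnd_e n).trans hzero⟩

theorem eigenspace_ne_bot_of_abs_le (t : IsSl2Triple h e f) {j m : ℤ}
    (hm : (toEnd R L M h).eigenspace (m : R) ≠ ⊥) (hjm : |j| ≤ m) (hmod : j ≡ m [ZMOD 2]) :
    (toEnd R L M h).eigenspace (j : R) ≠ ⊥ := by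
  obtain ⟨v, hv, hv₀⟩ := (Submodule.ne_bot_iff _).1 hm
  obtain ⟨n, w, P⟩ :=
    exists_hasPrimitiveVectorWith_add_two_mul t (End.mem_eigenspace_iff.1 hv) hv₀
  obtain ⟨N, hN⟩ := P.exists_nat
  have hmN : m + 2 * n = N := by exact_mod_cast hN
  obtain ⟨i, hi, hij⟩ : ∃ i : ℕ, i ≤ N ∧ j = N - 2 * i := by
    rw [Int.ModEq] at hmod
    exact ⟨((N - j) / 2).toNat, by grind, by grind⟩
  rw [hN] at P
  simpa [hij] using eigenspace_sub_two_mul_ne_bot P hi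

theorem eigenspace_ne_bot_of_abs_le_abs (t : IsSl2Triple h e f) {j m : ℤ}
    (hm : (toEnd R L M h).eigenspace (m : R) ≠ ⊥) (hjm : |j| ≤ |m|) (hmod : j ≡ m [ZMOD 2]) :
    (toEnd R L M h).eigenspace (j : R) ≠ ⊥ := by
  rcases abs_cases m with ⟨habs, -⟩ | ⟨habs, -⟩
  · exact eigenspace_ne_bot_of_abs_le t hm (habs ▸ hjm) hmod
  · have hneg (i : ℤ) : (toEnd R L M (-h)).eigenspace ((-i : ℤ) : R) =
        (toEnd R L M h).eigenspace (i : R) := by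
      rw [map_neg, Int.cast_neg, neg_eigenspace_neg]
    rw [← hneg] at hm ⊢
    exact eigenspace_ne_bot_of_abs_le t.symm hm (by rwa [abs_neg, ← habs]) hmod.neg

theorem stmt8_general (hhe : ⁅h, e⁆ = (2 : R) • e) (hhf : ⁅h, f⁆ = (-2 : R) • f)
    (hef : ⁅e, f⁆ = h) {j m : ℤ} (hj : (toEnd R L M h).eigenspace (j : R) = ⊥)
    (hjm : |j| ≤ |m|) (hmod : j ≡ m [ZMOD 2]) :
    (toEnd R L M h).eigenspace (m : R) = ⊥ := by
  by_cases hh : h = 0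
  · by_cases hm : m = 0
    · obtain rfl : j = m := by simpa [hm] using hjm
      exact hj
    · rw [hh, map_zero]
      exact zero_eigenspace_eq_bot (Int.cast_ne_zero.2 hm)
  · have t := isSl2Triple_of_lie_eq_smul R hh hhe hhf hef
    by_contra hm
    exact eigenspace_ne_bot_of_abs_le_abs t hm hjm hmod hj

end Weights

theorem gwt_eq_eigenspace {k g : Type*} [Field k] [LieRing g] [LieAlgebra k g] (H : g) (i : ℤ) :
    gwt k H i = (toEnd k g g H).eigenspace (i : k) := by
  ext z
  exact (End.mem_eigenspace_iff (f := toEnd k g g H)).symm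

/-- If `x` is even, i.e. `g_1 = 0`, then `g_m = 0` for every odd integer `m`. -/
theorem stmt8 {k : Type*} [Field k] [CharZero k]
    {g : Type*} [LieRing g] [LieAlgebra k g] [FiniteDimensional k g]
    (H x Y : g) (hHx : ⁅H, x⁆ = (2 : k) • x) (hHY : ⁅H, Y⁆ = (-2 : k) • Y)
    (hxY : ⁅x, Y⁆ = H) (heven : gwt k H 1 = ⊥) :
    ∀ m : ℤ, Odd m → gwt k H m = ⊥ := by
  simp only [gwt_eq_eigenspace] at heven ⊢
  exact fun m hm ↦ stmt8_general hHx hHY hxY heven (by grind) (Int.odd_iff.1 hm).symm
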